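/- Fix an integer n ≥ 2 and complex numbers α(k,j) for k ∈ {1,…,n}, j ≥ 1, and assume there is a real number r < 1 with |α(k,j)| ≤ r for all k, j. Define p(k,j) = ∏_{i=1}^{j} (1 − |α(k,i)|²), and set D_{q+1} = ∏_{j=1}^{q} s_j for q ≥ 1. Then lim_{q→∞} (log D_{q+1})/(q·n^q) = Σ_{k=1}^n Σ_{j=1}^∞ log(1 − |α(k,j)|²) / n^j, the inner series converging absolutely. -/

import Mathlib

open Filter

/-- The weight `t(w)` of a word `w` over the alphabet `Fin n`: if
`w = i₁^{j₁} i₂^{j₂} ⋯ i_m^{j_m}` is the run decomposition of `w`, then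
`t(w) = ∏_t p (i_t) (j_t)`. -/
noncomputable def runProd {n : ℕ} (p : Fin n → ℕ → ℝ) (w : List (Fin n)) : ℝ :=
  ((w.splitBy (· == ·)).map (fun r =>
    match r with
    | [] => 1
    | a :: t => p a (t.length + 1))).prod

/-- `sWord n p q = ∏_w t(w)`, the product over all `n^q` words `w` of length `q`. -/
noncomputable def sWord (n : ℕ) (p : Fin n → ℕ → ℝ) (q : ℕ) : ℝ :=
  ∏ f : Fin q → Fin n, runProd p (List.ofFn f)

/-!
Prepending a letter `a` to a word `w` lengthens the leading run of `a` by one, so it multiplies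
`t(w)` by `c(a, j + 1)`, where `c(a, j) = p(a, j) / p(a, j - 1)` and `j` counts the leading `a`s
of `w`. Exactly `n ^ (q - j)` words of length at most `q` have `j` leading `a`s: a word of length
`q - j` that is stripped of its leading `a`s and then preceded by `a ^ j` is such a word, and all
of them arise once. Multiplying over the words of length at most `q` gives
`D_{q+2} = D_{q+1} ^ n * ∏ k, ∏ j ≤ q, c(k, j + 1) ^ (n ^ (q - j))`.
After taking logarithms, `log D_{q+1} / (q * n ^ q)` is precisely the Cesàro mean of the first `q`
partial sums of the limiting series.
-/

open Finset Topology

theorem prod_ofFn_succ {α M : Type*} [Fintype α] [CommMonoid M] (q : ℕ) (F : List α → M) :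
    ∏ f : Fin (q + 1) → α, F (List.ofFn f) =
      ∏ a, ∏ f : Fin q → α, F (a :: List.ofFn f) := by
  rw [← (Fin.consEquiv fun _ : Fin (q + 1) => α).prod_comp, Fintype.prod_prod_type]
  simp [Fin.consEquiv, List.ofFn_succ]

section LeadingCount

variable {α M : Type*} [DecidableEq α]

/-- The number of leading letters of `w` that are equal to `a`, that is, the length of the run of
`a` at the start of `w` (`0` if `w` does not start with `a`). -/
def leadingCount (a : α) (w : List α) : ℕ :=
  (w.takeWhile (· == a)).length

theorem leadingCount_cons (a b : α) (w : List α) :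
    leadingCount a (b :: w) = if b = a then leadingCount a w + 1 else 0 := by
  by_cases h : b = a <;> simp [leadingCount, h]

theorem replicate_leadingCount_append_dropWhile (a : α) (w : List α) :
    List.replicate (leadingCount a w) a ++ w.dropWhile (· == a) = w := by
  have hrun : w.takeWhile (· == a) = List.replicate (leadingCount a w) a :=
    List.eq_replicate_iff.2 ⟨rfl, fun b hb => by simpa using List.mem_takeWhile_imp hb⟩
  rw [← hrun, List.takeWhile_append_dropWhile]

variable [Fintype α] [CommMonoid M]

theorem prod_leadingCount_succ (a : α) (q : ℕ) (F : ℕ → M) :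
    ∏ f : Fin (q + 1) → α, F (leadingCount a (List.ofFn f)) =
      (∏ f : Fin q → α, F (leadingCount a (List.ofFn f) + 1)) *
        F 0 ^ (Fintype.card α ^ q * (Fintype.card α - 1)) := by
  have hother : ∀ b ∈ univ.erase a, ∏ f : Fin q → α, F (leadingCount a (b :: List.ofFn f)) =
      F 0 ^ Fintype.card α ^ q := fun b hb => by
    simp [leadingCount_cons, ne_of_mem_erase hb]
  rw [prod_ofFn_succ q fun w => F (leadingCount a w), ← mul_prod_erase _ _ (mem_univ a),
    prod_congr rfl hother, prod_const, card_erase_of_mem (mem_univ a), card_univ, pow_mul]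
  simp [leadingCount_cons]

theorem prod_range_prod_leadingCount (a : α) (q : ℕ) (F : ℕ → M) :
    ∏ m ∈ range (q + 1), ∏ f : Fin m → α, F (leadingCount a (List.ofFn f)) =
      ∏ j ∈ range (q + 1), F j ^ Fintype.card α ^ (q - j) := by
  induction q generalizing F with
  | zero => simp [leadingCount]
  | succ q ih =>
    have hcard : Fintype.card α - 1 + 1 = Fintype.card α :=
      Nat.sub_add_cancel (Fintype.card_pos_iff.2 ⟨a⟩)
    have hgeom : (∑ m ∈ range (q + 1), Fintype.card α ^ m) * (Fintype.card α - 1) + 1 =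
        Fintype.card α ^ (q + 1) := by
      simpa only [hcard] using geom_sum_mul_add (Fintype.card α - 1) (q + 1)
    rw [prod_range_succ' _ (q + 1), prod_range_succ' _ (q + 1)]
    simp only [prod_leadingCount_succ, prod_mul_distrib, ih fun j => F (j + 1),
      prod_pow_eq_pow_sum, ← sum_mul, Nat.add_sub_add_right, Nat.sub_zero, ← hgeom, pow_succ,
      mul_assoc]
    simp [leadingCount]

end LeadingCount

section Words

variable {n : ℕ} {p c : Fin n → ℕ → ℝ}

theorem runProd_replicate_append {a : Fin n} (hp : p a 0 = 1) (j : ℕ) {w : List (Fin n)}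
    (hw : ∀ b ∈ w.head?, b ≠ a) :
    runProd p (List.replicate j a ++ w) = p a j * runProd p w := by
  cases j with
  | zero => simp [hp]
  | succ j =>
    have hsplit : (List.replicate (j + 1) a ++ w).splitBy (· == ·) =
        List.replicate (j + 1) a :: w.splitBy (· == ·) := by
      rw [List.splitBy_append, List.splitBy_of_isChain (by simp)
        (List.isChain_replicate_of_rel _ (by simp)), List.singleton_append]
      intro x hx b hb
      obtain rfl := List.eq_of_mem_replicate (List.mem_of_mem_getLast? hx)
      simpa using (hw b hb).symm
    rw [runProd, hsplit]
    simp [runProd, List.replicate_succ]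

theorem runProd_cons (hp : ∀ k j, p k j = ∏ i ∈ Icc 1 j, c k i) (a : Fin n)
    (w : List (Fin n)) :
    runProd p (a :: w) = runProd p w * c a (leadingCount a w + 1) := by
  have hp0 : p a 0 = 1 := by simp [hp]
  have hrest : ∀ b ∈ (w.dropWhile (· == a)).head?, b ≠ a := by
    intro b hb
    have hnot := List.head?_dropWhile_not (· == a) w
    rw [Option.mem_def.1 hb] at hnot
    simpa using hnot
  have hw := runProd_replicate_append hp0 (leadingCount a w) hrest
  have haw := runProd_replicate_append hp0 (leadingCount a w + 1) hrest
  rw [replicate_leadingCount_append_dropWhile] at hw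
  rw [List.replicate_succ, List.cons_append, replicate_leadingCount_append_dropWhile] at haw
  rw [haw, hw, hp, hp, prod_Icc_succ_top (Nat.le_add_left 1 _)]
  ring

theorem sWord_zero (p : Fin n → ℕ → ℝ) : sWord n p 0 = 1 := by
  simp [sWord, runProd]

theorem sWord_succ (hp : ∀ k j, p k j = ∏ i ∈ Icc 1 j, c k i) (q : ℕ) :
    sWord n p (q + 1) = sWord n p q ^ n *
      ∏ k, ∏ f : Fin q → Fin n, c k (leadingCount k (List.ofFn f) + 1) := by
  simp only [sWord, prod_ofFn_succ q (runProd p), runProd_cons hp, prod_mul_distrib, prod_const,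
    card_univ, Fintype.card_fin]

theorem sWord_pos (hp : ∀ k j, p k j = ∏ i ∈ Icc 1 j, c k i) (hc : ∀ k j, 0 < c k (j + 1))
    (q : ℕ) : 0 < sWord n p q := by
  induction q with
  | zero => simp [sWord_zero]
  | succ q ih =>
    rw [sWord_succ hp]
    exact mul_pos (pow_pos ih n) (prod_pos fun k _ => prod_pos fun _ _ => hc k _)

theorem prod_sWord_succ (hp : ∀ k j, p k j = ∏ i ∈ Icc 1 j, c k i) (q : ℕ) :
    ∏ m ∈ Icc 1 (q + 1), sWord n p m =
      (∏ m ∈ Icc 1 q, sWord n p m) ^ n *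
        ∏ k, ∏ j ∈ range (q + 1), c k (j + 1) ^ n ^ (q - j) := by
  have hrange : ∏ m ∈ range (q + 1), sWord n p m = ∏ m ∈ Icc 1 q, sWord n p m := by
    rw [prod_range_eq_mul_Ico _ (Nat.add_one_pos q), sWord_zero, one_mul,
        Ico_add_one_right_eq_Icc]
  calc ∏ m ∈ Icc 1 (q + 1), sWord n p m
    _ = ∏ m ∈ range (q + 1), sWord n p (m + 1) := by
      rw [range_eq_Ico, prod_Ico_add' (sWord n p), zero_add, Ico_add_one_right_eq_Icc]
    _ = (∏ m ∈ range (q + 1), sWord n p m) ^ n *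
        ∏ k, ∏ m ∈ range (q + 1), ∏ f : Fin m → Fin n,
          c k (leadingCount k (List.ofFn f) + 1) := by
      simp only [sWord_succ hp, prod_mul_distrib, prod_pow]
      rw [Finset.prod_comm]
    _ = _ := by
      simp only [hrange, fun k => prod_range_prod_leadingCount k q fun j => c k (j + 1),
        Fintype.card_fin]

theorem log_prod_sWord_div (hn : n ≠ 0) (hp : ∀ k j, p k j = ∏ i ∈ Icc 1 j, c k i)
    (hc : ∀ k j, 0 < c k (j + 1)) (q : ℕ) :
    Real.log (∏ m ∈ Icc 1 q, sWord n p m) / (n : ℝ) ^ q =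
      ∑ m ∈ range q, ∑ k, ∑ j ∈ range (m + 1), Real.log (c k (j + 1)) / (n : ℝ) ^ (j + 1) := by
  have hn' : (n : ℝ) ≠ 0 := Nat.cast_ne_zero.2 hn
  induction q with
  | zero => simp
  | succ q ih =>
    have hD : ∏ m ∈ Icc 1 q, sWord n p m ≠ 0 :=
      prod_ne_zero_iff.2 fun m _ => (sWord_pos hp hc m).ne'
    have hfactor : ∀ k, ∀ j ∈ range (q + 1), c k (j + 1) ^ n ^ (q - j) ≠ 0 :=
      fun k j _ => pow_ne_zero _ (hc k j).ne'
    have hterm : ∀ k, ∀ j ∈ range (q + 1), Real.log (c k (j + 1) ^ n ^ (q - j)) /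
        (n : ℝ) ^ (q + 1) = Real.log (c k (j + 1)) / (n : ℝ) ^ (j + 1) := fun k j hj => by
      have hpow : (n : ℝ) ^ (q + 1) = n ^ (q - j) * n ^ (j + 1) := by
        rw [← pow_add, ← add_assoc, Nat.sub_add_cancel (mem_range_succ_iff.1 hj)]
      rw [Real.log_pow, Nat.cast_pow, hpow, mul_div_mul_left _ _ (pow_ne_zero _ hn')]
    rw [prod_sWord_succ hp, Real.log_mul (pow_ne_zero n hD)
      (prod_ne_zero_iff.2 fun k _ => prod_ne_zero_iff.2 (hfactor k)), Real.log_pow, add_div,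
      pow_succ' _ q, mul_div_mul_left _ _ hn', ih, ← pow_succ' _ q, sum_range_succ,
      Real.log_prod fun k _ => prod_ne_zero_iff.2 (hfactor k), sum_div]
    congr 1
    exact sum_congr rfl fun k _ => by
      rw [Real.log_prod (hfactor k), sum_div, sum_congr rfl (hterm k)]

end Words

theorem abs_log_one_sub_sq_le {x r : ℝ} (hx : |x| ≤ r) (hr : r < 1) :
    |Real.log (1 - x ^ 2)| ≤ -Real.log (1 - r ^ 2) := by
  have hsq : x ^ 2 ≤ r ^ 2 := sq_le_sq.2 (hx.trans (le_abs_self r))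
  have hr2 : 0 < 1 - r ^ 2 := sub_pos.2 (pow_lt_one₀ ((abs_nonneg x).trans hx) hr two_ne_zero)
  rw [abs_of_nonpos (Real.log_nonpos (by linarith) (by linarith [sq_nonneg x]))]
  exact neg_le_neg (Real.log_le_log hr2 (by linarith))

theorem summable_abs_div_pow_succ {b C : ℝ} (hb : 1 < b) {x : ℕ → ℝ} (hx : ∀ j, |x j| ≤ C) :
    Summable fun j : ℕ => |x j| / b ^ (j + 1) := by
  have hb0 : 0 < b := one_pos.trans hb
  have hgeom : Summable fun j : ℕ => C * b⁻¹ ^ (j + 1) :=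
    ((summable_nat_add_iff 1).2 (summable_geometric_of_lt_one (inv_nonneg.2 hb0.le)
      (inv_lt_one_of_one_lt₀ hb))).mul_left C
  refine hgeom.of_nonneg_of_le (fun j => by positivity) fun j => ?_
  rw [inv_pow, ← div_eq_mul_inv]
  gcongr
  exact hx j

theorem stmt_15_general {n : ℕ} (hn : n ≠ 0) {p c : Fin n → ℕ → ℝ}
    (hc : ∀ k j, 0 < c k (j + 1)) (hp : ∀ k j, p k j = ∏ i ∈ Icc 1 j, c k i) {D : ℕ → ℝ}
    (hD : ∀ q, 1 ≤ q → D (q + 1) = ∏ j ∈ Icc 1 q, sWord n p j) {S : Fin n → ℝ}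
    (hS : ∀ k, Tendsto (fun m => ∑ j ∈ range m, Real.log (c k (j + 1)) / (n : ℝ) ^ (j + 1)) atTop
      (𝓝 (S k))) :
    Tendsto (fun q : ℕ => Real.log (D (q + 1)) / (q * (n : ℝ) ^ q)) atTop (𝓝 (∑ k, S k)) := by
  have hpartial : Tendsto (fun m => ∑ k, ∑ j ∈ range (m + 1),
      Real.log (c k (j + 1)) / (n : ℝ) ^ (j + 1)) atTop (𝓝 (∑ k, S k)) :=
    tendsto_finsetSum _ fun k _ => (hS k).comp (tendsto_add_atTop_nat 1)
  refine hpartial.cesaro.congr' ?_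
  filter_upwards [eventually_ge_atTop 1] with q hq
  rw [hD q hq, ← log_prod_sWord_div hn hp hc, inv_mul_eq_div, div_div, mul_comm (q : ℝ)]

/-- For complex numbers `α(k,j)` with `|α(k,j)| ≤ r < 1`, set
`p(k,j) = ∏_{i=1}^j (1 - |α(k,i)|²)` and `D_{q+1} = ∏_{j=1}^q s_j`. Then each series
`Σ_{j=1}^∞ log(1 - |α(k,j)|²)/n^j` converges absolutely and
`lim_{q→∞} (log D_{q+1})/(q·n^q) = Σ_{k=1}^n Σ_{j=1}^∞ log(1 - |α(k,j)|²)/n^j`. -/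
theorem stmt_15 (n : ℕ) (hn : 2 ≤ n) (α : Fin n → ℕ → ℂ)
    (r : ℝ) (hr : r < 1)
    (hbound : ∀ k, ∀ j, 1 ≤ j → ‖α k j‖ ≤ r)
    (p : Fin n → ℕ → ℝ)
    (hp : ∀ k j, p k j = ∏ i ∈ Finset.Icc 1 j, (1 - ‖α k i‖ ^ 2))
    (D : ℕ → ℝ)
    (hD : ∀ q, 1 ≤ q → D (q + 1) = ∏ j ∈ Finset.Icc 1 q, sWord n p j) :
    (∀ k, Summable (fun j : ℕ => |Real.log (1 - ‖α k (j + 1)‖ ^ 2)| / (n : ℝ) ^ (j + 1))) ∧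
    Tendsto (fun q : ℕ => Real.log (D (q + 1)) / (q * (n : ℝ) ^ q)) atTop
      (nhds (∑ k, ∑' j : ℕ, Real.log (1 - ‖α k (j + 1)‖ ^ 2) / (n : ℝ) ^ (j + 1))) := by
  have hle : ∀ k j, ‖α k (j + 1)‖ ≤ r := fun k j => hbound k (j + 1) j.succ_pos
  have hsummable := fun k => summable_abs_div_pow_succ (Nat.one_lt_cast.2 hn) fun j =>
    abs_log_one_sub_sq_le ((abs_norm _).trans_le (hle k j)) hr
  exact ⟨hsummable, stmt_15_general (by omega)
    (fun k j => sub_pos.2 (pow_lt_one₀ (norm_nonneg _) ((hle k j).trans_lt hr) two_ne_zero)) hp hD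
    fun k => (Summable.of_abs (by simpa [abs_div] using hsummable k)).hasSum.tendsto_sum_nat⟩
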